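/- Let M = (M_t)_{t≥0} be a continuous F-martingale that is uniformly bounded (|M_t(ω)| ≤ K for all t, ω, for some constant K). Let T be an F-stopping time and define D(ω) := inf{ t > T(ω) : M_t(ω) = 0 } with the convention inf ∅ = ∞. Then P( {T < ∞} ∩ {M_T = 0} ∩ {T < D} ) = 0; in other words, almost surely a stopping time is not the left endpoint of an excursion interval of M away from 0. -/

import Mathlib

/-!
If `T` is the left endpoint of an excursion, then for some rational `r > T` the path is nonzero on
`(T, r]`, hence of constant sign there. Passing to `-M` if needed, it suffices to show that
for fixed `r` and `c > 0` the event `A` that `T ≤ r`, `M_T = 0`, `M ≥ 0` on `[T, r]` and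
`M_r ≥ c` is null.

On the uniform grid of `[0, r]` with `n + 1` steps, the tracker `trackSet` begins at the first grid
point not before `T`, provided `0 ≤ M ≤ δ` there, and continues as long as `M ≥ 0` on the grid.
Being on the tracker at a grid time is known at that time, so the increments of `M` over the
tracker have mean zero. The only other contributions to `M_r` on the final tracker event are the
starting value, at most `δ`, and the overshoot below `0` when the tracker is left, which happens
at most once and costs at most the largest grid increment `gridOsc` (`trackSet_pathwise`). Hence
`E[M_r; tracker] ≤ δ + E[gridOsc]` (`integral_trackSet_le`). As `n → ∞` the last term tends to `0`
by uniform continuity of paths and dominated convergence, and every path in `A` is eventually on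
the tracker (`eventually_mem_trackSet`). Markov's inequality gives `P A ≤ δ / c` for every `δ > 0`.
-/

open MeasureTheory MeasurableSpace Set
open scoped NNReal ENNReal symmDiff

noncomputable section

variable {Ω : Type*}

/-- `T` is an `F`-stopping time with values in `[0,∞]`. -/
def IsStoppingTimeE (F : ℝ≥0 → MeasurableSpace Ω) (T : Ω → ℝ≥0∞) : Prop :=
  ∀ t : ℝ≥0, MeasurableSet[F t] {ω | T ω ≤ (t : ℝ≥0∞)}

/-- The members of the sequence `T` have pairwise disjoint graphs. -/
def DisjointGraphs [MeasurableSpace Ω] (P : Measure Ω) (T : ℕ → Ω → ℝ≥0∞) : Prop :=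
  ∀ n m, n ≠ m → P {ω | T n ω = T m ω ∧ T n ω < ∞} = 0

/-- `T` is an exhausting sequence of the random time `τ`. -/
def ExhaustingSeq [MeasurableSpace Ω] (P : Measure Ω) (F : ℝ≥0 → MeasurableSpace Ω)
    (τ : Ω → ℝ≥0∞) (T : ℕ → Ω → ℝ≥0∞) : Prop :=
  (∀ n, IsStoppingTimeE F (T n)) ∧ DisjointGraphs P T ∧
    (∀ᵐ ω ∂P, τ ω < ∞ → ∃ n, τ ω = T n ω)

/-- `τ` is an `F`-thin time. -/
def IsThinTime [MeasurableSpace Ω] (P : Measure Ω) (F : ℝ≥0 → MeasurableSpace Ω)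
    (τ : Ω → ℝ≥0∞) : Prop :=
  ∃ T : ℕ → Ω → ℝ≥0∞, ExhaustingSeq P F τ T

/-- `τ` is an `F`-thick time: it avoids all `F`-stopping times. -/
def IsThickTime [MeasurableSpace Ω] (P : Measure Ω) (F : ℝ≥0 → MeasurableSpace Ω)
    (τ : Ω → ℝ≥0∞) : Prop :=
  ∀ T : Ω → ℝ≥0∞, IsStoppingTimeE F T → P {ω | τ ω = T ω ∧ τ ω < ∞} = 0

/-- The filtration `F` (of sub-σ-algebras of the ambient σ-algebra) satisfies the
usual conditions: monotone, right-continuous and complete. -/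
def UsualConditions [m𝒢 : MeasurableSpace Ω] (P : Measure Ω)
    (F : ℝ≥0 → MeasurableSpace Ω) : Prop :=
  Monotone F ∧ (∀ t, F t ≤ m𝒢) ∧ (∀ t : ℝ≥0, F t = ⨅ u ∈ Set.Ioi t, F u) ∧
    (∀ s : Set Ω, P s = 0 → MeasurableSet[F 0] s)

/-- The progressive enlargement `F^ρ` of `F` with the random time `ρ`. -/
def progEnlarge (F : ℝ≥0 → MeasurableSpace Ω) (ρ : Ω → ℝ≥0∞) (t : ℝ≥0) :
    MeasurableSpace Ω :=
  ⨅ u ∈ Set.Ioi t, (F u ⊔ MeasurableSpace.generateFrom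
    {A : Set Ω | ∃ s : ℝ≥0, s ≤ u ∧ A = {ω | ρ ω ≤ (s : ℝ≥0∞)}})

/-- The σ-algebra `σ(C_n : n ≥ 0)` generated by the partition of a thin time `τ` with
exhausting sequence `T`, where `C_0 = {τ = ∞}` and `C_n = {τ = T_n < ∞}` for `n ≥ 1`. -/
def partitionSigma (τ : Ω → ℝ≥0∞) (T : ℕ → Ω → ℝ≥0∞) : MeasurableSpace Ω :=
  MeasurableSpace.generateFrom
    ({{ω | τ ω = ∞}} ∪ Set.range fun n => {ω | τ ω = T n ω ∧ τ ω < ∞})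

/-- The initial enlargement of `F` with a σ-algebra `𝒞`. -/
def initEnlarge (F : ℝ≥0 → MeasurableSpace Ω) (𝒞 : MeasurableSpace Ω) (t : ℝ≥0) :
    MeasurableSpace Ω :=
  ⨅ s ∈ Set.Ioi t, (F s ⊔ 𝒞)

/-- `M` is a martingale with respect to the filtration `G` under `P`. -/
def IsMartingaleWrt [MeasurableSpace Ω] (P : Measure Ω) (G : ℝ≥0 → MeasurableSpace Ω)
    (M : ℝ≥0 → Ω → ℝ) : Prop :=
  (∀ t, StronglyMeasurable[G t] (M t)) ∧ (∀ t, Integrable (M t) P) ∧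
    ∀ s t : ℝ≥0, s ≤ t → P[M t | G s] =ᵐ[P] M s

/-- `F` is immersed in `G`: every `F`-martingale is a `G`-martingale. -/
def Immersed [MeasurableSpace Ω] (P : Measure Ω) (F G : ℝ≥0 → MeasurableSpace Ω) : Prop :=
  ∀ M : ℝ≥0 → Ω → ℝ, IsMartingaleWrt P F M → IsMartingaleWrt P G M

/-- The σ-algebra `F_T` of the stopping time `T`. -/
def stoppingSigma [m𝒢 : MeasurableSpace Ω] (F : ℝ≥0 → MeasurableSpace Ω) (T : Ω → ℝ≥0∞)
    (hT : IsStoppingTimeE F T) : MeasurableSpace Ω where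
  MeasurableSet' A := MeasurableSet[m𝒢] A ∧
    ∀ t : ℝ≥0, MeasurableSet[F t] (A ∩ {ω | T ω ≤ (t : ℝ≥0∞)})
  measurableSet_empty :=
    ⟨MeasurableSet.empty, fun t => by
      simp only [Set.empty_inter]
      exact @MeasurableSet.empty Ω (F t)⟩
  measurableSet_compl := by
    rintro A ⟨hA, hA'⟩
    refine ⟨hA.compl, fun t => ?_⟩
    have h : Aᶜ ∩ {ω | T ω ≤ (t : ℝ≥0∞)}
        = {ω | T ω ≤ (t : ℝ≥0∞)} \ (A ∩ {ω | T ω ≤ (t : ℝ≥0∞)}) := by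
      ext ω; simp only [Set.mem_inter_iff, Set.mem_compl_iff, Set.mem_diff, Set.mem_setOf_eq]
      tauto
    rw [h]
    exact (hT t).diff (hA' t)
  measurableSet_iUnion := by
    intro f hf
    refine ⟨MeasurableSet.iUnion fun n => (hf n).1, fun t => ?_⟩
    rw [Set.iUnion_inter]
    exact MeasurableSet.iUnion fun n => (hf n).2 t

/-- `τ` is an `F`-honest time. -/
def IsHonestTime [MeasurableSpace Ω] (P : Measure Ω) (F : ℝ≥0 → MeasurableSpace Ω)
    (τ : Ω → ℝ≥0∞) : Prop :=
  ∀ t : ℝ≥0, 0 < t → ∃ σ : Ω → ℝ≥0∞, Measurable[F t] σ ∧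
    ∀ᵐ ω ∂P, τ ω < (t : ℝ≥0∞) → τ ω = σ ω

/-- `(τ₁, τ₂)` is a thin-thick decomposition of the random time `τ`. -/
def ThinThickDecomp [MeasurableSpace Ω] (P : Measure Ω) (F : ℝ≥0 → MeasurableSpace Ω)
    (τ τ₁ τ₂ : Ω → ℝ≥0∞) : Prop :=
  IsThinTime P F τ₁ ∧ IsThickTime P F τ₂ ∧
    (∀ᵐ ω ∂P, τ ω = min (τ₁ ω) (τ₂ ω)) ∧ (∀ᵐ ω ∂P, max (τ₁ ω) (τ₂ ω) = ∞)


/-! ### Tracking an excursion along a grid -/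

/-- The excursion tracker along the grid `t`: `trackSet M T δ t i` is the event that at the first
grid point `t k ≥ T` one has `M ≤ δ`, that `k ≤ i`, and that `M ≥ 0` at every grid point from
`t k` to `t i`. -/
def trackSet (M : ℝ≥0 → Ω → ℝ) (T : Ω → ℝ≥0∞) (δ : ℝ) (t : ℕ → ℝ≥0) : ℕ → Set Ω
  | 0 => {ω | T ω ≤ (t 0 : ℝ≥0∞)} ∩ ({ω | 0 ≤ M (t 0) ω} ∩ {ω | M (t 0) ω ≤ δ})
  | i + 1 => {ω | 0 ≤ M (t (i + 1)) ω} ∩ (trackSet M T δ t i ∪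
      ({ω | T ω ≤ (t (i + 1) : ℝ≥0∞)} ∩ ({ω | T ω ≤ (t i : ℝ≥0∞)}ᶜ ∩
        {ω | M (t (i + 1)) ω ≤ δ})))

lemma trackSet_nonneg {M : ℝ≥0 → Ω → ℝ} {T : Ω → ℝ≥0∞} {δ : ℝ} {t : ℕ → ℝ≥0} {i : ℕ} {ω : Ω}
    (h : ω ∈ trackSet M T δ t i) : 0 ≤ M (t i) ω := by
  cases i with
  | zero => exact h.2.1
  | succ i => exact h.1

lemma trackSet_measurable {F : ℝ≥0 → MeasurableSpace Ω} (hF : Monotone F)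
    {M : ℝ≥0 → Ω → ℝ} (hM : ∀ t, StronglyMeasurable[F t] (M t))
    {T : Ω → ℝ≥0∞} (hT : IsStoppingTimeE F T) (δ : ℝ) {t : ℕ → ℝ≥0} (ht : Monotone t) (i : ℕ) :
    MeasurableSet[F (t i)] (trackSet M T δ t i) := by
  have h0 : ∀ i, MeasurableSet[F (t i)] {ω | 0 ≤ M (t i) ω} := fun i =>
    (hM (t i)).measurable measurableSet_Ici
  have h1 : ∀ i, MeasurableSet[F (t i)] {ω | M (t i) ω ≤ δ} := fun i =>
    (hM (t i)).measurable measurableSet_Iic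
  induction i with
  | zero => exact (hT (t 0)).inter ((h0 0).inter (h1 0))
  | succ i ih =>
    have hle := hF (ht (Nat.le_succ i))
    exact (h0 (i + 1)).inter ((hle _ ih).union
      ((hT (t (i + 1))).inter (((hle _ (hT (t i))).compl).inter (h1 (i + 1)))))

/-- Pathwise bound: `M` on the tracker exceeds the sum of its increments over the tracker by at most
the starting value (at most `δ`) plus the single overshoot below `0` when the tracker is left (at
most `η`). The first two conjuncts, that nothing happens before `T` and that no overshoot occurs
while on the tracker, are what makes the induction on `i` work. -/
lemma trackSet_pathwise (M : ℝ≥0 → Ω → ℝ) (T : Ω → ℝ≥0∞) {δ η : ℝ} (hδ : 0 ≤ δ) (hη : 0 ≤ η)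
    {t : ℕ → ℝ≥0} (ht : Monotone t) (ω : Ω) (n : ℕ)
    (hosc : ∀ i < n, |M (t (i + 1)) ω - M (t i) ω| ≤ η) (i : ℕ) (hi : i ≤ n) :
    let Z := (trackSet M T δ t i).indicator (M (t i)) ω - ∑ j ∈ Finset.range i,
      (trackSet M T δ t j).indicator (fun ω => M (t (j + 1)) ω - M (t j) ω) ω
    (¬ T ω ≤ (t i : ℝ≥0∞) → ω ∉ trackSet M T δ t i ∧ Z = 0) ∧
      (ω ∈ trackSet M T δ t i → Z ≤ δ) ∧ Z ≤ δ + η := by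
  classical
  induction i with
  | zero =>
    intro Z
    by_cases h : ω ∈ trackSet M T δ t 0
    · have hZ : Z = M (t 0) ω := by simp [Z, h]
      have := h.2.2
      simp only [mem_ofPred_eq] at this
      exact ⟨fun hT => absurd h.1 hT, fun _ => by linarith, by linarith⟩
    · have hZ : Z = 0 := by simp [Z, h]
      exact ⟨fun _ => ⟨h, hZ⟩, fun h' => absurd h' h, by linarith⟩
  | succ i ih =>
    intro Z
    obtain ⟨ih1, ih2, ih3⟩ := ih (by omega)
    have hstep := abs_le.1 (hosc i (by omega))
    have hTt : T ω ≤ (t i : ℝ≥0∞) → T ω ≤ (t (i + 1) : ℝ≥0∞) := fun h =>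
      h.trans (by exact_mod_cast ht (Nat.le_succ i))
    by_cases hi' : ω ∈ trackSet M T δ t i
    · have hTi : T ω ≤ (t i : ℝ≥0∞) := by
        by_contra hcon
        exact (ih1 hcon).1 hi'
      have hX := trackSet_nonneg hi'
      have ih2' := ih2 hi'
      simp only [indicator_of_mem hi'] at ih2'
      by_cases h : 0 ≤ M (t (i + 1)) ω
      · have hs : ω ∈ trackSet M T δ t (i + 1) := ⟨h, Or.inl hi'⟩
        have hZ : Z ≤ δ := by
          simp only [Z, Finset.sum_range_succ, indicator_of_mem hi', indicator_of_mem hs]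
          linarith
        exact ⟨fun h => absurd (hTt hTi) h, fun _ => hZ, by linarith⟩
      · have hs : ω ∉ trackSet M T δ t (i + 1) := fun h' => h h'.1
        have hZ : Z ≤ δ + η := by
          simp only [Z, Finset.sum_range_succ, indicator_of_mem hi', indicator_of_notMem hs]
          linarith
        exact ⟨fun h => absurd (hTt hTi) h, fun h' => absurd h' hs, hZ⟩
    · simp only [indicator_of_notMem hi'] at ih1 ih3
      by_cases hTi : T ω ≤ (t i : ℝ≥0∞)
      · have hs : ω ∉ trackSet M T δ t (i + 1) := fun h' => by
          rcases h'.2 with h' | h'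
          · exact hi' h'
          · exact h'.2.1 hTi
        have hZ : Z ≤ δ + η := by
          simp only [Z, Finset.sum_range_succ, indicator_of_notMem hi', indicator_of_notMem hs]
          linarith
        exact ⟨fun h => absurd (hTt hTi) h, fun h' => absurd h' hs, hZ⟩
      · have hsum := (ih1 hTi).2
        by_cases hs : ω ∈ trackSet M T δ t (i + 1)
        · rcases hs.2 with h' | ⟨h1, -, h2⟩
          · exact absurd h' hi'
          have hZ : Z ≤ δ := by
            simp only [Z, Finset.sum_range_succ, indicator_of_notMem hi', indicator_of_mem hs]
            simp only [mem_ofPred_eq] at h2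
            linarith
          exact ⟨fun h => absurd h1 h, fun _ => hZ, by linarith⟩
        · have hZ : Z = 0 := by
            simp only [Z, Finset.sum_range_succ, indicator_of_notMem hi', indicator_of_notMem hs]
            linarith
          exact ⟨fun _ => ⟨hs, hZ⟩, fun h' => absurd h' hs, by linarith⟩

/-- Expectation of `trackSet_pathwise`: the increments over the tracker have mean zero. -/
lemma integral_trackSet_le [m𝒢 : MeasurableSpace Ω] {P : Measure Ω} [IsProbabilityMeasure P]
    {F : ℝ≥0 → MeasurableSpace Ω} (hF : Monotone F) (hFle : ∀ t, F t ≤ m𝒢)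
    {M : ℝ≥0 → Ω → ℝ} (hM : IsMartingaleWrt P F M)
    {T : Ω → ℝ≥0∞} (hT : IsStoppingTimeE F T) {δ : ℝ} (hδ : 0 ≤ δ)
    {t : ℕ → ℝ≥0} (ht : Monotone t) (n : ℕ) {η : Ω → ℝ} (hη : Integrable η P)
    (hη0 : ∀ ω, 0 ≤ η ω) (hosc : ∀ ω, ∀ i < n, |M (t (i + 1)) ω - M (t i) ω| ≤ η ω) :
    ∫ ω in trackSet M T δ t n, M (t n) ω ∂P ≤ δ + ∫ ω, η ω ∂P := by
  have hmeasF := trackSet_measurable hF hM.1 hT δ ht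
  have hmeas : ∀ i, MeasurableSet (trackSet M T δ t i) := fun i => hFle _ _ (hmeasF i)
  have hInc : ∀ j, Integrable
      ((trackSet M T δ t j).indicator (fun ω => M (t (j + 1)) ω - M (t j) ω)) P := fun j =>
    ((hM.2.1 _).sub (hM.2.1 _)).indicator (hmeas j)
  have hzero : ∀ j, ∫ ω, (trackSet M T δ t j).indicator
      (fun ω => M (t (j + 1)) ω - M (t j) ω) ω ∂P = 0 := by
    intro j
    rw [integral_indicator (hmeas j), integral_sub (hM.2.1 _).integrableOn (hM.2.1 _).integrableOn,
      ← setIntegral_condExp (hFle (t j)) (hM.2.1 (t (j + 1))) (hmeasF j),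
      setIntegral_congr_ae (hmeas j)
        ((hM.2.2 _ _ (ht (Nat.le_succ j))).mono fun x hx _ => hx), sub_self]
  have key : ∫ ω, (trackSet M T δ t n).indicator (M (t n)) ω ∂P ≤
      ∫ ω, (δ + η ω + ∑ j ∈ Finset.range n, (trackSet M T δ t j).indicator
        (fun ω => M (t (j + 1)) ω - M (t j) ω) ω) ∂P := by
    refine integral_mono ((hM.2.1 _).indicator (hmeas n))
      (((integrable_const δ).add hη).add (integrable_finsetSum _ fun j _ => hInc j)) fun ω => ?_
    have := (trackSet_pathwise M T hδ (hη0 ω) ht ω n (hosc ω) n le_rfl).2.2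
    dsimp only
    linarith
  rw [integral_indicator (hmeas n), integral_add (f := fun ω => δ + η ω)
    ((integrable_const δ).add hη) (integrable_finsetSum _ fun j _ => hInc j), integral_add (integrable_const δ) hη,
    integral_finsetSum _ fun j _ => hInc j] at key
  simpa [hzero] using key

/-! ### Uniform grids and grid oscillation -/

/-- The uniform grid of mesh `r / (n + 1)`. -/
def unifGrid (r : ℝ≥0) (n i : ℕ) : ℝ≥0 := r * i / (n + 1)

lemma unifGrid_mono (r : ℝ≥0) (n : ℕ) : Monotone (unifGrid r n) := fun i j h => by
  unfold unifGrid; gcongr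

lemma unifGrid_last (r : ℝ≥0) (n : ℕ) : unifGrid r n (n + 1) = r := by
  unfold unifGrid; push_cast; field_simp

lemma unifGrid_succ (r : ℝ≥0) (n i : ℕ) :
    unifGrid r n (i + 1) = unifGrid r n i + r / (n + 1) := by
  unfold unifGrid; push_cast; ring

lemma tendsto_mesh (r : ℝ≥0) :
    Filter.Tendsto (fun n : ℕ => ((r / (n + 1) : ℝ≥0) : ℝ)) Filter.atTop (nhds 0) := by
  have := (tendsto_one_div_add_atTop_nhds_zero_nat (𝕜 := ℝ)).const_mul (r : ℝ)
  simp only [mul_zero] at this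
  refine this.congr fun n => ?_
  push_cast; ring

/-- The largest increment of `M` over the uniform grid on `[0, r]`. -/
def gridOsc (M : ℝ≥0 → Ω → ℝ) (r : ℝ≥0) (n : ℕ) (ω : Ω) : ℝ :=
  (Finset.range (n + 1)).sup' Finset.nonempty_range_add_one
    fun i => |M (unifGrid r n (i + 1)) ω - M (unifGrid r n i) ω|

lemma le_gridOsc (M : ℝ≥0 → Ω → ℝ) (r : ℝ≥0) (n : ℕ) (ω : Ω) {i : ℕ} (hi : i < n + 1) :
    |M (unifGrid r n (i + 1)) ω - M (unifGrid r n i) ω| ≤ gridOsc M r n ω :=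
  Finset.le_sup' (fun i => |M (unifGrid r n (i + 1)) ω - M (unifGrid r n i) ω|)
    (Finset.mem_range.2 hi)

lemma gridOsc_nonneg (M : ℝ≥0 → Ω → ℝ) (r : ℝ≥0) (n : ℕ) (ω : Ω) : 0 ≤ gridOsc M r n ω :=
  (abs_nonneg _).trans (le_gridOsc M r n ω (Nat.succ_pos n))

lemma gridOsc_le {M : ℝ≥0 → Ω → ℝ} {K : ℝ} (hK : ∀ t ω, |M t ω| ≤ K) (r : ℝ≥0) (n : ℕ)
    (ω : Ω) : gridOsc M r n ω ≤ 2 * K :=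
  Finset.sup'_le _ _ fun i _ => (abs_sub _ _).trans (by
    linarith [hK (unifGrid r n (i + 1)) ω, hK (unifGrid r n i) ω])

lemma gridOsc_tendsto {M : ℝ≥0 → Ω → ℝ} {ω : Ω} (hc : Continuous fun t : ℝ≥0 => M t ω)
    (r : ℝ≥0) : Filter.Tendsto (fun n => gridOsc M r n ω) Filter.atTop (nhds 0) := by
  have huc : UniformContinuousOn (fun t : ℝ≥0 => M t ω) (Icc 0 r) :=
    isCompact_Icc.uniformContinuousOn_of_continuous hc.continuousOn
  rw [Metric.tendsto_atTop]
  intro ε hε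
  obtain ⟨d, hd, h⟩ := Metric.uniformContinuousOn_iff.1 huc ε hε
  obtain ⟨N, hN⟩ := Filter.eventually_atTop.1 ((tendsto_mesh r).eventually_lt_const hd)
  refine ⟨N, fun n hn => ?_⟩
  rw [Real.dist_eq, sub_zero, abs_of_nonneg (gridOsc_nonneg M r n ω)]
  refine (Finset.sup'_lt_iff _).2 fun i hi => ?_
  have hmem : ∀ j ≤ n + 1, unifGrid r n j ∈ Icc 0 r := fun j hj =>
    ⟨zero_le, (unifGrid_mono r n hj).trans (unifGrid_last r n).le⟩
  have hi' := Finset.mem_range.1 hi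
  refine h _ (hmem _ (by omega)) _ (hmem _ (by omega)) ?_
  rw [NNReal.dist_eq, unifGrid_succ, NNReal.coe_add, add_sub_cancel_left,
    abs_of_nonneg (NNReal.coe_nonneg _)]
  exact hN n hn

lemma gridOsc_measurable [MeasurableSpace Ω] {M : ℝ≥0 → Ω → ℝ} (hM : ∀ t, Measurable (M t))
    (r : ℝ≥0) (n : ℕ) : Measurable (gridOsc M r n) := by
  unfold gridOsc
  exact Finset.measurable_range_sup'' fun k _ =>
    continuous_abs.measurable.comp ((hM _).sub (hM _))

lemma gridOsc_integrable [MeasurableSpace Ω] {P : Measure Ω} [IsProbabilityMeasure P]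
    {M : ℝ≥0 → Ω → ℝ} (hM : ∀ t, Measurable (M t)) {K : ℝ} (hK : ∀ t ω, |M t ω| ≤ K)
    (r : ℝ≥0) (n : ℕ) : Integrable (gridOsc M r n) P :=
  Integrable.of_bound (gridOsc_measurable hM r n).aestronglyMeasurable (2 * K)
    (Filter.Eventually.of_forall fun ω => by
      rw [Real.norm_eq_abs, abs_of_nonneg (gridOsc_nonneg M r n ω)]
      exact gridOsc_le hK r n ω)

lemma integral_gridOsc_tendsto [MeasurableSpace Ω] {P : Measure Ω} [IsProbabilityMeasure P]
    {M : ℝ≥0 → Ω → ℝ} (hM : ∀ t, Measurable (M t)) {K : ℝ} (hK : ∀ t ω, |M t ω| ≤ K)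
    (hc : ∀ ω, Continuous fun t : ℝ≥0 => M t ω) (r : ℝ≥0) :
    Filter.Tendsto (fun n => ∫ ω, gridOsc M r n ω ∂P) Filter.atTop (nhds 0) := by
  have := tendsto_integral_of_dominated_convergence (μ := P) (F := gridOsc M r)
    (f := fun _ => (0 : ℝ)) (fun _ => 2 * K)
    (fun n => (gridOsc_measurable hM r n).aestronglyMeasurable) (integrable_const _)
    (fun n => Filter.Eventually.of_forall fun ω => by
      rw [Real.norm_eq_abs, abs_of_nonneg (gridOsc_nonneg M r n ω)]
      exact gridOsc_le hK r n ω)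
    (Filter.Eventually.of_forall fun ω => gridOsc_tendsto (hc ω) r)
  simpa using this

/-! ### Excursions up to a fixed time -/

/-- A path that starts a nonnegative excursion at `T` and keeps it up to time `r` is caught by
the tracker on every sufficiently fine grid. -/
lemma eventually_mem_trackSet {M : ℝ≥0 → Ω → ℝ} {T : Ω → ℝ≥0∞} {δ : ℝ} (hδ : 0 < δ) {ω : Ω}
    (hc : Continuous fun t : ℝ≥0 => M t ω) {r s : ℝ≥0} (hs : T ω = s) (hsr : s ≤ r)
    (h0 : M s ω = 0) (hpos : ∀ u, s ≤ u → u ≤ r → 0 ≤ M u ω) :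
    ∀ᶠ n in Filter.atTop, ω ∈ trackSet M T δ (unifGrid r n) (n + 1) := by
  have hlt : ∀ᶠ u in nhds s, M u ω < δ :=
    hc.continuousAt.eventually_lt_const (by simpa [h0] using hδ)
  obtain ⟨d, hd, hball⟩ := Metric.eventually_nhds_iff.1 hlt
  filter_upwards [(tendsto_mesh r).eventually_lt_const hd] with n hn
  have hmem : ∀ j ≤ n + 1, unifGrid r n j ≤ r := fun j hj =>
    (unifGrid_mono r n hj).trans (unifGrid_last r n).le
  have main : ∀ i ≤ n + 1, T ω ≤ (unifGrid r n i : ℝ≥0∞) →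
      ω ∈ trackSet M T δ (unifGrid r n) i := by
    intro i
    induction i with
    | zero =>
      intro hi hT
      have hT' : s ≤ unifGrid r n 0 := by rw [hs] at hT; exact_mod_cast hT
      have hz : unifGrid r n 0 = s := le_antisymm (by simp [unifGrid]) hT'
      refine ⟨hT, ?_, ?_⟩
      · simp [hz, h0]
      · simp [hz, h0, hδ.le]
    | succ i ih =>
      intro hi hT
      have hT' : s ≤ unifGrid r n (i + 1) := by rw [hs] at hT; exact_mod_cast hT
      refine ⟨hpos _ hT' (hmem _ hi), ?_⟩
      by_cases hTi : T ω ≤ (unifGrid r n i : ℝ≥0∞)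
      · exact Or.inl (ih (by omega) hTi)
      · refine Or.inr ⟨hT, hTi, le_of_lt (hball ?_)⟩
        have hTi' : unifGrid r n i < s := by
          rw [hs, not_le] at hTi; exact_mod_cast hTi
        rw [NNReal.dist_eq, abs_of_nonneg (sub_nonneg.2 (by exact_mod_cast hT'))]
        have h2 : (unifGrid r n i : ℝ) < s := by exact_mod_cast hTi'
        rw [unifGrid_succ, NNReal.coe_add]
        linarith
  refine main (n + 1) le_rfl ?_
  rw [hs, unifGrid_last]
  exact_mod_cast hsr

/-- A stopping time almost surely does not start a nonnegative excursion lasting up to `r` with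
`M r ≥ c > 0`. -/
lemma measure_excursion_level [m𝒢 : MeasurableSpace Ω] {P : Measure Ω} [IsProbabilityMeasure P]
    {F : ℝ≥0 → MeasurableSpace Ω} (hF : Monotone F) (hFle : ∀ t, F t ≤ m𝒢)
    {M : ℝ≥0 → Ω → ℝ} (hM : IsMartingaleWrt P F M)
    (hc : ∀ ω, Continuous fun t : ℝ≥0 => M t ω) {K : ℝ} (hK : ∀ t ω, |M t ω| ≤ K)
    {T : Ω → ℝ≥0∞} (hT : IsStoppingTimeE F T) (r : ℝ≥0) {c : ℝ} (hc0 : 0 < c) :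
    P {ω | ∃ s : ℝ≥0, T ω = s ∧ s ≤ r ∧ M s ω = 0 ∧ (∀ u, s ≤ u → u ≤ r → 0 ≤ M u ω) ∧
      c ≤ M r ω} = 0 := by
  have hMm : ∀ t, Measurable (M t) := fun t => ((hM.1 t).mono (hFle t)).measurable
  set A := {ω | ∃ s : ℝ≥0, T ω = s ∧ s ≤ r ∧ M s ω = 0 ∧ (∀ u, s ≤ u → u ≤ r → 0 ≤ M u ω) ∧
      c ≤ M r ω} with hA
  have hbound : ∀ δ : ℝ, 0 < δ → P A ≤ ENNReal.ofReal (δ / c) := by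
    intro δ hδ
    let B : ℕ → Set Ω := fun n => trackSet M T δ (unifGrid r n) (n + 1) ∩ {ω | c ≤ M r ω}
    have hBm : ∀ n, MeasurableSet (B n) := fun n =>
      (hFle _ _ (trackSet_measurable hF hM.1 hT δ (unifGrid_mono r n) (n + 1))).inter
        (measurableSet_le measurable_const (hMm r))
    have hPB : ∀ n, P (B n) ≤ ENNReal.ofReal ((δ + ∫ ω, gridOsc M r n ω ∂P) / c) := by
      intro n
      have hEm := hFle _ _ (trackSet_measurable hF hM.1 hT δ (unifGrid_mono r n) (n + 1))
      have h1 := integral_trackSet_le hF hFle hM hT hδ.le (unifGrid_mono r n) (n + 1)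
        (gridOsc_integrable hMm hK r n) (gridOsc_nonneg M r n)
        (fun ω i hi => le_gridOsc M r n ω hi)
      have h2 : ∫ ω in B n, M r ω ∂P ≤
          ∫ ω in trackSet M T δ (unifGrid r n) (n + 1), M (unifGrid r n (n + 1)) ω ∂P := by
        simp only [unifGrid_last r n]
        refine setIntegral_mono_set (hM.2.1 _).integrableOn ?_ inter_subset_left.eventuallyLE
        filter_upwards [ae_restrict_mem hEm] with ω hω
        have := trackSet_nonneg hω
        rwa [unifGrid_last] at this
      have h3 : c * P.real (B n) ≤ ∫ ω in B n, M r ω ∂P :=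
        setIntegral_ge_of_const_le_real (hBm n) (measure_ne_top _ _) (fun ω h => h.2)
          (hM.2.1 r).integrableOn
      rw [← ofReal_measureReal]
      refine ENNReal.ofReal_le_ofReal ((le_div_iff₀ hc0).2 ?_)
      linarith
    have hlim : Filter.Tendsto
        (fun n => ENNReal.ofReal ((δ + ∫ ω, gridOsc M r n ω ∂P) / c)) Filter.atTop
        (nhds (ENNReal.ofReal (δ / c))) := by
      have h := ((integral_gridOsc_tendsto (P := P) hMm hK hc r).const_add δ).div_const c
      rw [add_zero] at h
      exact (ENNReal.continuous_ofReal.tendsto _).comp h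
    have hsub : A ⊆ ⋃ n, ⋂ m ≥ n, B m := by
      rintro ω ⟨s, hs, hsr, h0, hpos, hcr⟩
      obtain ⟨n, hn⟩ := Filter.eventually_atTop.1
        (eventually_mem_trackSet hδ (hc ω) hs hsr h0 hpos)
      exact mem_iUnion.2 ⟨n, mem_iInter₂.2 fun m hm => ⟨hn m hm, hcr⟩⟩
    refine (measure_mono hsub).trans ?_
    have hmono : Monotone fun n => ⋂ m ≥ n, B m := fun a b hab ω hω =>
      mem_iInter₂.2 fun m hm => mem_iInter₂.1 hω m (le_trans hab hm)
    rw [hmono.measure_iUnion]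
    refine iSup_le fun n => ge_of_tendsto hlim ?_
    filter_upwards [Filter.eventually_ge_atTop n] with m hm
    exact (measure_mono (iInter₂_subset m hm)).trans (hPB m)
  have hlim : Filter.Tendsto (fun n : ℕ => ENNReal.ofReal ((1 / ((n : ℝ) + 1)) / c)) Filter.atTop
      (nhds 0) := by
    have h := (tendsto_one_div_add_atTop_nhds_zero_nat (𝕜 := ℝ)).div_const c
    rw [zero_div] at h
    have h' := (ENNReal.continuous_ofReal.tendsto _).comp h
    rwa [ENNReal.ofReal_zero] at h'
  exact le_antisymm (ge_of_tendsto hlim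
    (Filter.Eventually.of_forall fun n => hbound _ (by positivity))) (zero_le)

lemma measure_excursion_pos [m𝒢 : MeasurableSpace Ω] {P : Measure Ω} [IsProbabilityMeasure P]
    {F : ℝ≥0 → MeasurableSpace Ω} (hF : Monotone F) (hFle : ∀ t, F t ≤ m𝒢)
    {M : ℝ≥0 → Ω → ℝ} (hM : IsMartingaleWrt P F M)
    (hc : ∀ ω, Continuous fun t : ℝ≥0 => M t ω) {K : ℝ} (hK : ∀ t ω, |M t ω| ≤ K)
    {T : Ω → ℝ≥0∞} (hT : IsStoppingTimeE F T) (r : ℝ≥0) :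
    P {ω | ∃ s : ℝ≥0, T ω = s ∧ s ≤ r ∧ M s ω = 0 ∧ (∀ u, s ≤ u → u ≤ r → 0 ≤ M u ω) ∧
      0 < M r ω} = 0 := by
  refine measure_mono_null ?_ (measure_iUnion_null fun k : ℕ =>
    measure_excursion_level hF hFle hM hc hK hT r (c := 1 / ((k : ℝ) + 1)) (by positivity))
  rintro ω ⟨s, h1, h2, h3, h4, h5⟩
  obtain ⟨k, hk⟩ := exists_nat_one_div_lt h5
  exact mem_iUnion.2 ⟨k, s, h1, h2, h3, h4, hk.le⟩

lemma IsMartingaleWrt.neg [MeasurableSpace Ω] {P : Measure Ω} {F : ℝ≥0 → MeasurableSpace Ω}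
    {M : ℝ≥0 → Ω → ℝ} (hM : IsMartingaleWrt P F M) : IsMartingaleWrt P F (fun t ω => -M t ω) :=
  ⟨fun t => (hM.1 t).neg, fun t => (hM.2.1 t).neg, fun s t hst =>
    (condExp_neg (M t) (F s)).trans (hM.2.2 s t hst).neg⟩

/-- A continuous path without zeros on `(s, r]` that is positive at `r` is positive on
`(s, r]`. -/
lemma pos_of_no_zero {f : ℝ≥0 → ℝ} (hf : Continuous f) {s r u : ℝ≥0}
    (hne : ∀ u, s < u → u ≤ r → f u ≠ 0) (hr : 0 < f r) (hsu : s < u) (hur : u ≤ r) :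
    0 < f u := by
  by_contra hcon
  obtain ⟨v, hv, hv0⟩ := intermediate_value_Icc hur hf.continuousOn ⟨not_lt.1 hcon, hr.le⟩
  exact hne v (hsu.trans_le hv.1) hv.2 hv0

theorem stopping_time_not_left_end_of_excursion
    [m𝒢 : MeasurableSpace Ω] (P : Measure Ω) [IsProbabilityMeasure P]
    (F : ℝ≥0 → MeasurableSpace Ω) (hUC : UsualConditions P F)
    (M : ℝ≥0 → Ω → ℝ) (hM : IsMartingaleWrt P F M)
    (hMcont : ∀ ω, Continuous fun t : ℝ≥0 => M t ω)
    (K : ℝ) (hMbdd : ∀ t ω, |M t ω| ≤ K)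
    (T : Ω → ℝ≥0∞) (hT : IsStoppingTimeE F T) :
    P {ω | T ω < ∞ ∧ M (T ω).toNNReal ω = 0 ∧
        T ω < ⨅ t ∈ {t : ℝ≥0 | T ω < (t : ℝ≥0∞) ∧ M t ω = 0}, (t : ℝ≥0∞)} = 0 := by
  obtain ⟨hF, hFle, -, -⟩ := hUC
  have hpos := fun q : ℚ => measure_excursion_pos hF hFle hM hMcont hMbdd hT (q : ℝ).toNNReal
  have hneg := fun q : ℚ => measure_excursion_pos hF hFle hM.neg (fun ω => (hMcont ω).neg)
    (K := K) (fun t ω => by rw [abs_neg]; exact hMbdd t ω) hT (q : ℝ).toNNReal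
  refine measure_mono_null ?_ (measure_iUnion_null fun q : ℚ =>
    measure_union_null (hpos q) (hneg q))
  rintro ω ⟨hfin, hzero, hlt⟩
  obtain ⟨q, -, hTq, hqD⟩ := ENNReal.lt_iff_exists_rat_btwn.1 hlt
  have hs : T ω = ((T ω).toNNReal : ℝ≥0∞) := (ENNReal.coe_toNNReal hfin.ne).symm
  generalize (T ω).toNNReal = s at hs hzero
  generalize hr : (q : ℝ).toNNReal = r at hTq hqD
  have hsr : s < r := by rw [hs] at hTq; exact_mod_cast hTq
  have hne : ∀ u, s < u → u ≤ r → M u ω ≠ 0 := by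
    intro u hsu hur hu0
    refine absurd (hqD.trans_le (iInf₂_le u ⟨?_, hu0⟩)) ?_
    · rw [not_lt]; exact_mod_cast hur
    · rw [hs]; exact_mod_cast hsu
  refine mem_iUnion.2 ⟨q, ?_⟩
  rw [hr]
  rcases lt_or_gt_of_ne (hne r hsr le_rfl) with h | h
  · refine Or.inr ⟨s, hs, hsr.le, by simp [hzero], fun u hsu hur => ?_, by simpa using h⟩
    rcases hsu.eq_or_lt with rfl | hsu
    · simp [hzero]
    · exact (pos_of_no_zero (f := fun t => -M t ω) (hMcont ω).neg
        (fun v h1 h2 => neg_ne_zero.2 (hne v h1 h2)) (by simpa using h) hsu hur).le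
  · refine Or.inl ⟨s, hs, hsr.le, hzero, fun u hsu hur => ?_, h⟩
    rcases hsu.eq_or_lt with rfl | hsu
    · exact hzero.ge
    · exact (pos_of_no_zero (f := fun t => M t ω) (hMcont ω) hne h hsu hur).le

end
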